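/- Let A be an n×n real matrix and C an m×n real matrix. The continuous linear map Φ from the Sobolev space W^{1,1}([0,1], ℝ^n) to L¹([0,1], ℝ^m) × L¹([0,1], ℝ^n) defined by Φ(z) = (C z, ż − A z) has closed range. -/

import Mathlib

open MeasureTheory

/-!
A solution of `ż = a z + f` with `z t₀ = x` satisfies `(1 - V) z = x + ∫ f`, where the Volterra
operator `V z t = ∫ s in t₀..t, a (z s)` acts on bounded continuous functions. As
`‖Vⁿ⁺¹‖ = O(Kⁿ / n!)`, the operator `1 - V` is invertible, so the observation `c z` is a linear
function of `x` plus a continuous function of `f`. The range is therefore the preimage, under a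
continuous map, of the image of the finite-dimensional space of initial values.
-/

open Set
open scoped BoundedContinuousFunction Nat

namespace ObservationMap

theorem isUnit_one_sub_of_norm_pow_lt_one {R : Type*} [NormedRing R] [HasSummableGeomSeries R]
    {x : R} {n : ℕ} (hx : ‖x ^ n‖ < 1) : IsUnit (1 - x) := by
  have hcomm : Commute (1 - x) (∑ i ∈ Finset.range n, x ^ i) :=
    (mul_neg_geom_sum x n).trans (geom_sum_mul_neg x n).symm
  refine (hcomm.isUnit_mul_iff.mp ?_).1
  rw [mul_neg_geom_sum]
  exact isUnit_one_sub_of_norm_lt_one hx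

theorem isClosed_setOf_exists_eq_linear_add {𝕜 X Y W : Type*} [NontriviallyNormedField 𝕜]
    [CompleteSpace 𝕜] [AddCommGroup X] [Module 𝕜 X] [FiniteDimensional 𝕜 X]
    [AddCommGroup Y] [Module 𝕜 Y] [TopologicalSpace Y] [IsTopologicalAddGroup Y]
    [ContinuousSMul 𝕜 Y] [T2Space Y] [TopologicalSpace W]
    (L : X →ₗ[𝕜] Y) {S : W → Y} (hS : Continuous S) :
    IsClosed {p : Y × W | ∃ x, p.1 = L x + S p.2} := by
  have hcont : Continuous fun p : Y × W => p.1 - S p.2 := by fun_prop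
  convert! L.range.closed_of_finiteDimensional.preimage hcont using 1
  ext p
  exact exists_congr fun x => eq_comm.trans eq_sub_iff_add_eq.symm

theorem intervalIntegral_restrict_Icc {E : Type*} [NormedAddCommGroup E] [NormedSpace ℝ E]
    {μ : Measure ℝ} {t₀ t₁ t : ℝ} (ht : t ∈ Icc t₀ t₁) (f : ℝ → E) :
    ∫ s in t₀..t, f s ∂(μ.restrict (Icc t₀ t₁)) = ∫ s in t₀..t, f s ∂μ := by
  rw [intervalIntegral.integral_of_le ht.1, intervalIntegral.integral_of_le ht.1,
    Measure.restrict_restrict_of_subset (Ioc_subset_Icc_self.trans (Icc_subset_Icc_right ht.2))]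

theorem integral_mul_sub_pow_div_factorial (K t₀ t : ℝ) (n : ℕ) :
    ∫ s in t₀..t, K * ((K * (s - t₀)) ^ n / n !) = (K * (t - t₀)) ^ (n + 1) / (n + 1)! := by
  simp only [mul_pow, mul_div_assoc, intervalIntegral.integral_const_mul,
    intervalIntegral.integral_div, intervalIntegral.integral_comp_sub_right (· ^ n), integral_pow]
  rw [Nat.factorial_succ]
  push_cast
  field_simp
  ring

theorem intervalIntegrable_coeFn_L1 {E : Type*} [NormedAddCommGroup E] {μ : Measure ℝ}
    (w : Lp E 1 μ) (s t : ℝ) : IntervalIntegrable w μ s t :=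
  (L1.integrable_coeFn w).intervalIntegrable

noncomputable section

variable {E F : Type*} [NormedAddCommGroup E] [NormedSpace ℝ E]
  [NormedAddCommGroup F] [NormedSpace ℝ F]

/-- The constant functions, as a linear map from the space of values. -/
def constLinearMap : E →ₗ[ℝ] (ℝ →ᵇ E) where
  toFun := BoundedContinuousFunction.const ℝ
  map_add' _ _ := rfl
  map_smul' _ _ := rfl

@[simp]
theorem constLinearMap_apply (x : E) (t : ℝ) : constLinearMap x t = x := rfl

section Primitive

variable {μ : Measure ℝ}

theorem norm_intervalIntegral_coeFn_L1_le (w : Lp E 1 μ) (s t : ℝ) :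
    ‖∫ r in s..t, w r ∂μ‖ ≤ ‖w‖ := by
  rw [L1.norm_eq_integral_norm]
  exact intervalIntegral.norm_integral_le_integral_norm_uIoc.trans <|
    setIntegral_le_integral (L1.integrable_coeFn w).norm (ae_of_all _ fun _ => norm_nonneg _)

variable [NullSingletonClass μ]

variable (μ) in
/-- The primitive `t ↦ ∫ s in t₀..t, w s ∂μ` of an `L¹` function, as a continuous linear map into
the bounded continuous functions. The absence of atoms makes the primitive continuous. -/
def primitive (t₀ : ℝ) : Lp E 1 μ →L[ℝ] (ℝ →ᵇ E) :=
  LinearMap.mkContinuous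
    { toFun w := .ofNormedAddCommGroup (fun t => ∫ s in t₀..t, w s ∂μ)
        (intervalIntegral.continuous_primitive (intervalIntegrable_coeFn_L1 w) t₀) ‖w‖
        (norm_intervalIntegral_coeFn_L1_le w t₀)
      map_add' v w := by
        ext t
        refine (intervalIntegral.integral_congr_ae ?_).trans <| intervalIntegral.integral_add
          (intervalIntegrable_coeFn_L1 v t₀ t) (intervalIntegrable_coeFn_L1 w t₀ t)
        filter_upwards [Lp.coeFn_add v w] with s hs _ using hs
      map_smul' r w := by
        ext t
        refine (intervalIntegral.integral_congr_ae ?_).trans <|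
          intervalIntegral.integral_smul r fun s => w s
        filter_upwards [Lp.coeFn_smul r w] with s hs _ using hs }
    1 fun w => by
      rw [one_mul]
      exact BoundedContinuousFunction.norm_ofNormedAddCommGroup_le _ (norm_nonneg w)
        (norm_intervalIntegral_coeFn_L1_le w t₀)

theorem primitive_apply_of_ae_eq {w : Lp E 1 μ} {f : ℝ → E} (hf : w =ᵐ[μ] f) (t₀ t : ℝ) :
    primitive μ t₀ w t = ∫ s in t₀..t, f s ∂μ :=
  intervalIntegral.integral_congr_ae (hf.mono fun _ hs _ => hs)

@[simp]
theorem primitive_apply_self (w : Lp E 1 μ) (t₀ : ℝ) : primitive μ t₀ w t₀ = 0 :=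
  intervalIntegral.integral_same

theorem norm_primitive_le (w : Lp E 1 μ) (t₀ : ℝ) : ‖primitive μ t₀ w‖ ≤ ‖w‖ :=
  (BoundedContinuousFunction.norm_le (norm_nonneg w)).mpr (norm_intervalIntegral_coeFn_L1_le w t₀)

end Primitive

section Observation

variable (μ : Measure ℝ) [IsFiniteMeasure μ]

/-- The observation `t ↦ c (z t)` of a bounded continuous trajectory `z`, as an element of `L¹`. -/
def observation (c : E →L[ℝ] F) : (ℝ →ᵇ E) →L[ℝ] Lp F 1 μ :=
  c.compLpL 1 μ ∘L BoundedContinuousFunction.toLp 1 μ ℝ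

theorem coeFn_observation (c : E →L[ℝ] F) (z : ℝ →ᵇ E) :
    observation μ c z =ᵐ[μ] fun t => c (z t) := by
  filter_upwards [c.coeFn_compLpL (BoundedContinuousFunction.toLp 1 μ ℝ z),
    BoundedContinuousFunction.coeFn_toLp 1 μ ℝ z] with t hc hz
  exact hc.trans (congrArg c hz)

end Observation

section Volterra

variable (μ : Measure ℝ) [IsFiniteMeasure μ] [NullSingletonClass μ]

/-- The Volterra operator `z ↦ ∫ s in t₀..t, a (z s) ∂μ` of the linear equation `ż = a z`. -/
def volterra (t₀ : ℝ) (a : E →L[ℝ] E) : (ℝ →ᵇ E) →L[ℝ] (ℝ →ᵇ E) :=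
  primitive μ t₀ ∘L observation μ a

theorem volterra_apply (t₀ : ℝ) (a : E →L[ℝ] E) (z : ℝ →ᵇ E) (t : ℝ) :
    volterra μ t₀ a z t = ∫ s in t₀..t, a (z s) ∂μ :=
  primitive_apply_of_ae_eq (coeFn_observation μ a z) t₀ t

theorem norm_volterra_le_of_ae_bound (t₀ : ℝ) (a : E →L[ℝ] E) {z : ℝ →ᵇ E} {B : ℝ} (hB : 0 ≤ B)
    (hz : ∀ᵐ t ∂μ, ‖z t‖ ≤ B) : ‖volterra μ t₀ a z‖ ≤ μ.real univ * (‖a‖ * B) := by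
  refine (norm_primitive_le _ t₀).trans ?_
  have hobs : ∀ᵐ t ∂μ, ‖observation μ a z t‖ ≤ ‖a‖ * B := by
    filter_upwards [coeFn_observation μ a z, hz] with t ht hzt
    rw [ht]
    exact a.le_opNorm_of_le hzt
  simpa [measureUnivNNReal] using! Lp.norm_le_of_ae_bound (by positivity) hobs

end Volterra

section VolterraIcc

variable (t₀ t₁ : ℝ) (a : E →L[ℝ] E)

theorem norm_volterra_pow_apply_le (n : ℕ) (z : ℝ →ᵇ E) {t : ℝ} (ht : t ∈ Icc t₀ t₁) :
    ‖(volterra (volume.restrict (Icc t₀ t₁)) t₀ a ^ n) z t‖ ≤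
      (‖a‖ * (t - t₀)) ^ n / n ! * ‖z‖ := by
  induction n generalizing t with
  | zero => simpa using z.norm_coe_le_norm t
  | succ n ih =>
    rw [pow_succ', mul_apply_eq_comp, volterra_apply,
      intervalIntegral_restrict_Icc ht, ← integral_mul_sub_pow_div_factorial,
      ← intervalIntegral.integral_mul_const]
    refine intervalIntegral.norm_integral_le_of_norm_le ht.1 (ae_of_all _ fun s hs => ?_)
      (Continuous.intervalIntegrable (by fun_prop) _ _)
    rw [mul_assoc]
    exact a.le_opNorm_of_le (ih ⟨hs.1.le, hs.2.trans ht.2⟩)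

theorem norm_volterra_pow_succ_le (n : ℕ) :
    ‖volterra (volume.restrict (Icc t₀ t₁)) t₀ a ^ (n + 1)‖ ≤
      |t₁ - t₀| * ‖a‖ * ((‖a‖ * |t₁ - t₀|) ^ n / n !) := by
  set μ := volume.restrict (Icc t₀ t₁)
  have hμ : μ.real univ ≤ |t₁ - t₀| := by
    simp [μ, Real.volume_real_Icc, le_abs_self]
  refine ContinuousLinearMap.opNorm_le_bound _ (by positivity) fun z => ?_
  rw [pow_succ', mul_apply_eq_comp]
  have hpow : ∀ᵐ t ∂μ, ‖(volterra μ t₀ a ^ n) z t‖ ≤ (‖a‖ * |t₁ - t₀|) ^ n / n ! * ‖z‖ := by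
    filter_upwards [ae_restrict_mem measurableSet_Icc] with t ht
    have hlen : t - t₀ ≤ |t₁ - t₀| := (sub_le_sub_right ht.2 t₀).trans (le_abs_self _)
    have hnonneg : 0 ≤ t - t₀ := sub_nonneg.mpr ht.1
    grw [norm_volterra_pow_apply_le t₀ t₁ a n z ht, hlen]
  grw [norm_volterra_le_of_ae_bound μ t₀ a (by positivity) hpow, hμ]
  simp only [mul_assoc, le_refl]

theorem isUnit_one_sub_volterra [CompleteSpace E] :
    IsUnit (1 - volterra (volume.restrict (Icc t₀ t₁)) t₀ a) := by
  have hlim := (FloorSemiring.tendsto_pow_div_factorial_atTop (‖a‖ * |t₁ - t₀|)).const_mul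
    (|t₁ - t₀| * ‖a‖)
  rw [mul_zero] at hlim
  obtain ⟨n, hn⟩ := (hlim.eventually_lt_const one_pos).exists
  exact isUnit_one_sub_of_norm_pow_lt_one ((norm_volterra_pow_succ_le t₀ t₁ a n).trans_lt hn)

end VolterraIcc

section StateEquation

variable {t₀ t₁ : ℝ} {a : E →L[ℝ] E} {w : Lp E 1 (volume.restrict (Icc t₀ t₁))}

theorem exists_eqOn_one_sub_volterra_eq {z f : ℝ → E} (hz : ContinuousOn z (Icc t₀ t₁))
    (hf : IntegrableOn f (Icc t₀ t₁))
    (heq : ∀ t ∈ Icc t₀ t₁, z t = z t₀ + ∫ s in t₀..t, (a (z s) + f s))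
    (hw : w =ᵐ[volume.restrict (Icc t₀ t₁)] f) :
    ∃ ζ : ℝ →ᵇ E, EqOn z ζ (Icc t₀ t₁) ∧
      (1 - volterra (volume.restrict (Icc t₀ t₁)) t₀ a) ζ =
        constLinearMap (z t₀) + primitive _ t₀ w := by
  have hint : Integrable (fun s => a (z s) + f s) (volume.restrict (Icc t₀ t₁)) :=
    ((a.continuous.comp_continuousOn hz).integrableOn_compact isCompact_Icc).add hf
  -- The right-hand side of the integral equation extends `z` to a bounded function on `ℝ`.
  let ζ : ℝ →ᵇ E := constLinearMap (z t₀) + primitive _ t₀ hint.toL1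
  have hzζ : EqOn z ζ (Icc t₀ t₁) := fun t ht => by
    rw [heq t ht, ← intervalIntegral_restrict_Icc ht,
      ← primitive_apply_of_ae_eq hint.coeFn_toL1]
    rfl
  have hsplit : hint.toL1 = observation _ a ζ + w := by
    refine Lp.ext ?_
    filter_upwards [hint.coeFn_toL1, Lp.coeFn_add (observation _ a ζ) w,
      coeFn_observation _ a ζ, hw, ae_restrict_mem measurableSet_Icc] with s hs hadd hobs hws hsI
    rw [hs, hadd, Pi.add_apply, hobs, hws, hzζ hsI]
  refine ⟨ζ, hzζ, ?_⟩
  calc ζ - primitive _ t₀ (observation _ a ζ)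
      = constLinearMap (z t₀) + primitive _ t₀ (observation _ a ζ + w)
          - primitive _ t₀ (observation _ a ζ) := by rw [← hsplit]
    _ = constLinearMap (z t₀) + primitive _ t₀ w := by rw [map_add]; abel

theorem apply_eq_of_one_sub_volterra_eq {x : E} {z : ℝ →ᵇ E}
    (hz : (1 - volterra (volume.restrict (Icc t₀ t₁)) t₀ a) z =
      constLinearMap x + primitive _ t₀ w) {t : ℝ} (ht : t ∈ Icc t₀ t₁) :
    z t = z t₀ + ∫ s in t₀..t, (a (z s) + w s) := by
  have hz' : z = constLinearMap x + primitive _ t₀ (observation _ a z + w) := by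
    rw [map_add, add_left_comm, ← hz]
    exact (add_sub_cancel _ _).symm
  have hsum : ⇑(observation (volume.restrict (Icc t₀ t₁)) a z + w)
      =ᵐ[volume.restrict (Icc t₀ t₁)] fun s => a (z s) + w s :=
    (Lp.coeFn_add _ _).trans ((coeFn_observation _ a z).add .rfl)
  have h₀ : z t₀ = x := by rw [hz']; simp
  rw [h₀, ← intervalIntegral_restrict_Icc ht, ← primitive_apply_of_ae_eq hsum]
  exact DFunLike.congr_fun hz' t

theorem exists_solution_iff_exists_one_sub_volterra_eq (c : E →L[ℝ] F)
    (y : Lp F 1 (volume.restrict (Icc t₀ t₁))) :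
    (∃ z f : ℝ → E, ContinuousOn z (Icc t₀ t₁) ∧ IntegrableOn f (Icc t₀ t₁) ∧
      (∀ t ∈ Icc t₀ t₁, z t = z t₀ + ∫ s in t₀..t, (a (z s) + f s)) ∧
      y =ᵐ[volume.restrict (Icc t₀ t₁)] (fun t => c (z t)) ∧
      w =ᵐ[volume.restrict (Icc t₀ t₁)] f) ↔
    ∃ (x : E) (z : ℝ →ᵇ E), (1 - volterra (volume.restrict (Icc t₀ t₁)) t₀ a) z =
      constLinearMap x + primitive _ t₀ w ∧ y = observation _ c z := by
  constructor
  · rintro ⟨z, f, hz, hf, heq, hy, hw⟩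
    obtain ⟨ζ, hzζ, hζ⟩ := exists_eqOn_one_sub_volterra_eq hz hf heq hw
    refine ⟨z t₀, ζ, hζ, Lp.ext ?_⟩
    filter_upwards [hy, coeFn_observation _ c ζ, ae_restrict_mem measurableSet_Icc]
      with t hyt hobs ht
    rw [hyt, hobs, hzζ ht]
  · rintro ⟨x, z, hz, rfl⟩
    exact ⟨z, w, z.continuous.continuousOn, L1.integrable_coeFn w,
      fun t ht => apply_eq_of_one_sub_volterra_eq hz ht, coeFn_observation _ c z, .rfl⟩

end StateEquation

end

end ObservationMap

open ObservationMap in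
theorem observation_map_closed_range_general {E F : Type*}
    [NormedAddCommGroup E] [NormedSpace ℝ E] [FiniteDimensional ℝ E]
    [NormedAddCommGroup F] [NormedSpace ℝ F]
    (a : E →L[ℝ] E) (c : E →L[ℝ] F) (t₀ t₁ : ℝ) :
    IsClosed {w : Lp F 1 (volume.restrict (Icc t₀ t₁)) × Lp E 1 (volume.restrict (Icc t₀ t₁)) |
      ∃ z f : ℝ → E,
        ContinuousOn z (Icc t₀ t₁) ∧
        IntegrableOn f (Icc t₀ t₁) ∧
        (∀ t ∈ Icc t₀ t₁, z t = z t₀ + ∫ s in t₀..t, (a (z s) + f s)) ∧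
        w.1 =ᵐ[volume.restrict (Icc t₀ t₁)] (fun t => c (z t)) ∧
        w.2 =ᵐ[volume.restrict (Icc t₀ t₁)] f} := by
  have := FiniteDimensional.complete ℝ E
  obtain ⟨u, hu⟩ := isUnit_one_sub_volterra t₀ t₁ a
  let solve : (ℝ →ᵇ E) →L[ℝ] (ℝ →ᵇ E) := ↑u⁻¹
  have hsolve (z g : ℝ →ᵇ E) :
      (1 - volterra (volume.restrict (Icc t₀ t₁)) t₀ a) z = g ↔ z = solve g := by
    rw [← hu]
    exact (ContinuousLinearEquiv.ofUnit u).toEquiv.eq_symm_apply.symm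
  let observe := observation (volume.restrict (Icc t₀ t₁)) c ∘L solve
  convert isClosed_setOf_exists_eq_linear_add (observe.toLinearMap ∘ₗ constLinearMap)
    (observe ∘L primitive (volume.restrict (Icc t₀ t₁)) t₀).continuous using 3 with w
  rw [exists_solution_iff_exists_one_sub_volterra_eq]
  simp only [hsolve, exists_eq_left, map_add]
  rfl

/-- **Closed range of the observation map.**
The image of the map `Φ : W^{1,1}([0,1], ℝⁿ) → L¹([0,1], ℝᵐ) × L¹([0,1], ℝⁿ)`,
`Φ(z) = (C z, ż − A z)`, is closed.  An element `z` of `W^{1,1}` is encoded as a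
continuous function satisfying the integral identity `z t = z 0 + ∫₀ᵗ (A z + f)`
with integrable `f = ż − A z`, and the image is described inside the product of
the `L¹` spaces over `[0,1]`. -/
theorem observation_map_closed_range
    (n m : ℕ) (A : Matrix (Fin n) (Fin n) ℝ) (C : Matrix (Fin m) (Fin n) ℝ) :
    IsClosed { w : Lp (EuclideanSpace ℝ (Fin m)) 1 (volume.restrict (Set.Icc (0:ℝ) 1)) ×
                   Lp (EuclideanSpace ℝ (Fin n)) 1 (volume.restrict (Set.Icc (0:ℝ) 1)) |
      ∃ z f : ℝ → EuclideanSpace ℝ (Fin n),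
        ContinuousOn z (Set.Icc 0 1) ∧
        IntegrableOn f (Set.Icc 0 1) ∧
        (∀ t ∈ Set.Icc (0:ℝ) 1,
          z t = z 0 + ∫ s in (0:ℝ)..t, (Matrix.toEuclideanLin A (z s) + f s)) ∧
        (w.1 : ℝ → EuclideanSpace ℝ (Fin m))
            =ᵐ[volume.restrict (Set.Icc (0:ℝ) 1)] (fun t => Matrix.toEuclideanLin C (z t)) ∧
        (w.2 : ℝ → EuclideanSpace ℝ (Fin n)) =ᵐ[volume.restrict (Set.Icc (0:ℝ) 1)] f } :=
  observation_map_closed_range_general (Matrix.toEuclideanLin A).toContinuousLinearMap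
    (Matrix.toEuclideanLin C).toContinuousLinearMap 0 1
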